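/- The set 𝒫 of all compact path-connected metric spaces is path-connected as a subspace of the Gromov–Hausdorff space, and every nonempty open subset of 𝒫 (in the subspace topology) has infinite covering dimension. -/

import Mathlib

/-!
Path-connectedness: by the Kuratowski embedding every `p ∈ 𝒫` is the range of a continuous map from
a path-connected compact space into a fixed normed space. Scaling the map to a constant does not
leave `𝒫`, and ranges depend continuously on maps, so `p` is joined to the one-point space.

Dimension: it suffices to map a cube of dimension `n + 1` continuously and injectively into any ball
around `p`. Approximate `p` by a path-connected compact set `K` in some `ℝᵐ ⊆ ℝᵐ⁺ⁿ⁺¹` and attach to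
a point of `K` small cubes of the distinct dimensions `m + 1, …, m + n + 1`, whose side lengths
encode the coordinates. The points at which the local Hausdorff dimension is at least `m + j` form
the union of the cubes of dimension at least `m + j`. If side lengths decrease with the dimension,
the diameter of that set is the side length of the lowest-dimensional of these cubes, so the
isometry class determines all the coordinates.

That the cube of dimension `N` has covering dimension at least `N` is Lebesgue's covering theorem.
It rests on Sperner's lemma for the Kuhn triangulation: the sum of the signed determinants of the
barycentric coordinates of a labelling only depends on the boundary, because facets shared by two
simplices occur with opposite signs. A labelling respecting the boundary therefore has total degree
`1`, so some simplex carries all labels.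
-/

open GromovHausdorff

/-- A topological space has covering dimension at most `n` if every open cover
admits an open refinement that still covers the space and in which every point
lies in at most `n + 1` members of the refinement. -/
def CovDimLE (X : Type*) [TopologicalSpace X] (n : ℕ) : Prop :=
  ∀ U : Set (Set X), (∀ u ∈ U, IsOpen u) → ⋃₀ U = Set.univ →
    ∃ V : Set (Set X), (∀ w ∈ V, IsOpen w) ∧ ⋃₀ V = Set.univ ∧
      (∀ w ∈ V, ∃ u ∈ U, w ⊆ u) ∧
      ∀ x : X, {w ∈ V | x ∈ w}.encard ≤ (n : ℕ∞) + 1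

/-- The subset `𝒫` of the Gromov–Hausdorff space consisting of (isometry
classes of) path-connected compact metric spaces. -/
def GHPathConnected : Set GHSpace := {p | PathConnectedSpace p.Rep}

section KuhnDegree

variable {R : Type*} [CommRing R]

theorem det_of_eq_sum_minors {n : ℕ} {a : Fin (n + 1) → Fin (n + 1) → R}
    (ha : ∀ i, ∑ c, a i c = 1) :
    (Matrix.of a).det =
      ∑ i : Fin (n + 1),
        (-1) ^ (i : ℕ) * (Matrix.of fun r c : Fin n ↦ a (i.succAbove r) c.succ).det := by
  have column_sum := Matrix.det_updateCol_sum (Matrix.of a) 0 1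
  simp only [Pi.one_apply, one_smul, Matrix.of_apply, ha] at column_sum
  rw [← column_sum, Matrix.det_succ_column_zero]
  refine Finset.sum_congr rfl fun i _ ↦ ?_
  simp only [Matrix.updateCol_self, mul_one]
  congr 2

/-- The vertices of the Kuhn simplex with base point `x` and coordinate order `π`, listed from
`x + 1` (at `j = 0`) down to `x` (at `j = N`): the coordinate `i` drops at step `π i`. -/
def kuhnVertex {N : ℕ} (x : Fin N → ℕ) (π : Equiv.Perm (Fin N)) (j : Fin (N + 1)) : Fin N → ℕ :=
  fun i ↦ x i + if (j : ℕ) ≤ π i then 1 else 0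

/-- The signed volume swept out by the map which is affine on every simplex of the Kuhn
triangulation of the grid `{0, …, k}ᴺ` and has barycentric coordinates `f v` at the vertex `v`, in
units of the volume of the target simplex. -/
def kuhnDegree {N : ℕ} (k : ℕ) (f : (Fin N → ℕ) → Fin (N + 1) → R) : R :=
  ∑ π : Equiv.Perm (Fin N), ∑ x : Fin N → Fin k,
    Equiv.Perm.sign π • (Matrix.of fun j ↦ f (kuhnVertex (fun i ↦ x i) π j)).det

/-- The contribution to `kuhnDegree` of the facet opposite to the vertex `i` of a Kuhn simplex: the
minor of its matrix of barycentric coordinates obtained by deleting row `i` and column `0`. -/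
def facetMinor {M : ℕ} (f : (Fin (M + 1) → ℕ) → Fin (M + 2) → R) (i : Fin (M + 2))
    (π : Equiv.Perm (Fin (M + 1))) (x : Fin (M + 1) → ℕ) : R :=
  (Matrix.of fun r c : Fin (M + 1) ↦ f (kuhnVertex x π (i.succAbove r)) c.succ).det

theorem kuhnVertex_swap_mul {M : ℕ} (x : Fin (M + 1) → ℕ) (π : Equiv.Perm (Fin (M + 1)))
    (j : Fin M) {i : Fin (M + 2)} (hi : i ≠ j.succ.castSucc) :
    kuhnVertex x (Equiv.swap j.castSucc j.succ * π) i = kuhnVertex x π i := by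
  have hi' : (i : ℕ) ≠ j + 1 := by simpa [Fin.ext_iff] using hi
  ext c
  simp only [kuhnVertex, Equiv.Perm.mul_apply, Equiv.swap_apply_def, Fin.ext_iff, Fin.val_castSucc,
    Fin.val_succ]
  split_ifs <;> simp only [Fin.val_castSucc, Fin.val_succ] at * <;> omega

theorem sum_sign_smul_facetMinor_inner {M : ℕ} (f : (Fin (M + 1) → ℕ) → Fin (M + 2) → R)
    (j : Fin M) (x : Fin (M + 1) → ℕ) :
    ∑ π : Equiv.Perm (Fin (M + 1)),
      Equiv.Perm.sign π • facetMinor f j.succ.castSucc π x = 0 := by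
  have ne : j.castSucc ≠ j.succ := Fin.castSucc_lt_succ.ne
  refine Finset.sum_involution (fun π _ ↦ Equiv.swap j.castSucc j.succ * π) (fun π _ ↦ ?_)
    (fun π _ _ h ↦ ne (Equiv.swap_eq_refl_iff.mp (mul_eq_right.mp h))) (by simp)
    fun π _ ↦ Equiv.swap_mul_self_mul _ _ π
  simp only [facetMinor, kuhnVertex_swap_mul x π j (Fin.succAbove_ne _ _), Equiv.Perm.sign_mul,
    Equiv.Perm.sign_swap ne, neg_mul, one_mul, Units.neg_smul, add_neg_cancel]

theorem kuhnVertex_castSucc {M : ℕ} (x : Fin (M + 1) → ℕ) (π : Equiv.Perm (Fin (M + 1)))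
    (i : Fin (M + 1)) :
    kuhnVertex x π i.castSucc =
      kuhnVertex (x + Pi.single ((finRotate (M + 1) * π).symm 0) 1) (finRotate (M + 1) * π)
        i.succ := by
  obtain ⟨l, hl⟩ := π.surjective (Fin.last M)
  have rot_l : (finRotate (M + 1) * π) l = 0 := by simp [hl]
  rw [← rot_l, Equiv.symm_apply_apply]
  ext c
  simp only [kuhnVertex, Pi.add_apply, Equiv.Perm.mul_apply, Fin.val_castSucc, Fin.val_succ]
  by_cases hc : c = l
  · subst hc
    simp [hl, Fin.is_le]
  · have ne_last : π c ≠ Fin.last M := fun h ↦ hc (π.injective (h.trans hl.symm))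
    have rot_c : ((finRotate (M + 1) (π c) : Fin (M + 1)) : ℕ) = π c + 1 :=
      coe_finRotate_of_ne_last ne_last
    simp only [rot_c, Pi.single_eq_of_ne hc, add_zero, add_le_add_iff_right]

theorem facetMinor_last {M : ℕ} (f : (Fin (M + 1) → ℕ) → Fin (M + 2) → R)
    (π : Equiv.Perm (Fin (M + 1))) (x : Fin (M + 1) → ℕ) :
    facetMinor f (Fin.last (M + 1)) π x =
      facetMinor f 0 (finRotate (M + 1) * π)
        (x + Pi.single ((finRotate (M + 1) * π).symm 0) 1) := by
  simp only [facetMinor, Fin.succAbove_last, kuhnVertex_castSucc x π, Fin.zero_succAbove]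

theorem sum_sign_smul_facetMinor_last {M : ℕ} (f : (Fin (M + 1) → ℕ) → Fin (M + 2) → R)
    (x : Fin (M + 1) → ℕ) :
    ∑ π : Equiv.Perm (Fin (M + 1)),
        Equiv.Perm.sign π • ((-1) ^ (M + 1) * facetMinor f (Fin.last (M + 1)) π x) =
      -∑ π : Equiv.Perm (Fin (M + 1)),
        Equiv.Perm.sign π • facetMinor f 0 π (x + Pi.single (π.symm 0) 1) := by
  refine .trans ?_ (congrArg Neg.neg (Equiv.sum_comp (Equiv.mulLeft (finRotate (M + 1))) _))
  rw [← Finset.sum_neg_distrib]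
  refine Finset.sum_congr rfl fun π _ ↦ ?_
  rw [facetMinor_last, Equiv.coe_mulLeft, Equiv.Perm.sign_mul, sign_finRotate]
  simp only [Units.smul_def, zsmul_eq_mul]
  push_cast
  ring

theorem sum_grid_sub_eq_sum_facets {A : Type*} [AddCommGroup A] {M k : ℕ} (l : Fin (M + 1))
    (h : (Fin (M + 1) → ℕ) → A) :
    ∑ x : Fin (M + 1) → Fin k, (h (fun i ↦ x i) - h ((fun i ↦ (x i : ℕ)) + Pi.single l 1)) =
      ∑ y : Fin M → Fin k, (h (l.insertNth (α := fun _ ↦ ℕ) 0 fun i ↦ y i) -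
        h (l.insertNth (α := fun _ ↦ ℕ) k fun i ↦ y i)) := by
  rw [← Equiv.sum_comp (Fin.insertNthEquiv (fun _ ↦ Fin k) l), Fintype.sum_prod_type,
    Finset.sum_comm]
  refine Finset.sum_congr rfl fun y _ ↦ ?_
  let g (t : ℕ) : A := h (l.insertNth (α := fun _ ↦ ℕ) t fun i ↦ y i)
  rw [← Finset.sum_range_sub' g, ← Fin.sum_univ_eq_sum_range (fun t ↦ g t - g (t + 1))]
  refine Finset.sum_congr rfl fun t _ ↦ ?_
  congr 2 <;> ext i <;> cases i using Fin.succAboveCases l <;> simp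

theorem kuhnDegree_succ {M k : ℕ} {f : (Fin (M + 1) → ℕ) → Fin (M + 2) → R}
    (hf : ∀ v, ∑ c, f v c = 1) :
    kuhnDegree k f = ∑ π : Equiv.Perm (Fin (M + 1)), Equiv.Perm.sign π • ∑ y : Fin M → Fin k,
      (facetMinor f 0 π ((π.symm 0).insertNth (α := fun _ ↦ ℕ) 0 fun i ↦ y i) -
        facetMinor f 0 π ((π.symm 0).insertNth (α := fun _ ↦ ℕ) k fun i ↦ y i)) := by
  have sum_facets (x : Fin (M + 1) → ℕ) :
      ∑ π, Equiv.Perm.sign π • (Matrix.of fun j ↦ f (kuhnVertex x π j)).det =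
        ∑ π, Equiv.Perm.sign π •
          (facetMinor f 0 π x - facetMinor f 0 π (x + Pi.single (π.symm 0) 1)) := by
    have expand (π) : (Matrix.of fun j ↦ f (kuhnVertex x π j)).det =
        ∑ i : Fin (M + 2), (-1) ^ (i : ℕ) * facetMinor f i π x :=
      det_of_eq_sum_minors fun j ↦ hf (kuhnVertex x π j)
    have inner_vanish (j : Fin M) :
        ∑ π, Equiv.Perm.sign π • ((-1) ^ (j.castSucc.succ : ℕ) *
          facetMinor f j.castSucc.succ π x) = 0 := by
      simp_rw [← mul_smul_comm, ← Finset.mul_sum]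
      rw [Fin.succ_castSucc, sum_sign_smul_facetMinor_inner, mul_zero]
    simp_rw [expand, Finset.smul_sum]
    rw [Finset.sum_comm, Fin.sum_univ_succ, Fin.sum_univ_castSucc,
      Finset.sum_eq_zero fun j _ ↦ inner_vanish j, zero_add, Fin.succ_last, Fin.val_last,
      sum_sign_smul_facetMinor_last, ← sub_eq_add_neg, ← Finset.sum_sub_distrib]
    simp only [smul_sub, Fin.val_zero, pow_zero, one_mul]
  simp_rw [kuhnDegree]
  rw [Finset.sum_comm, Finset.sum_congr rfl fun x _ ↦ sum_facets _, Finset.sum_comm]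
  simp_rw [← Finset.smul_sum, sum_grid_sub_eq_sum_facets]

theorem facetMinor_zero_eq_zero {M t : ℕ} {f : (Fin (M + 1) → ℕ) → Fin (M + 2) → R}
    {π : Equiv.Perm (Fin (M + 1))} {c : Fin (M + 1)}
    (hf : ∀ v, v (π.symm 0) = t → f v c.succ = 0) (y : Fin M → ℕ) :
    facetMinor f 0 π ((π.symm 0).insertNth (α := fun _ ↦ ℕ) t y) = 0 :=
  Matrix.det_eq_zero_of_column_eq_zero c fun r ↦ hf _ <| by simp [kuhnVertex]

theorem facetMinor_zero_decomposeFin {M : ℕ} (f : (Fin (M + 1) → ℕ) → Fin (M + 2) → R)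
    (σ : Equiv.Perm (Fin M)) (y : Fin M → ℕ) :
    facetMinor f 0 (Equiv.Perm.decomposeFin.symm (0, σ)) (Fin.cons 0 y) =
      (Matrix.of fun j c ↦ f (Fin.cons 0 (kuhnVertex y σ j)) c.succ).det := by
  have vertex_eq (j : Fin (M + 1)) :
      kuhnVertex (Fin.cons 0 y) (Equiv.Perm.decomposeFin.symm (0, σ)) j.succ =
        Fin.cons 0 (kuhnVertex y σ j) := by
    ext i
    cases i using Fin.cases <;> simp [kuhnVertex]
  simp only [facetMinor, Fin.zero_succAbove, vertex_eq]

theorem kuhnDegree_eq_one {N k : ℕ} {f : (Fin N → ℕ) → Fin (N + 1) → R}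
    (hf : ∀ v, ∑ c, f v c = 1) (lower : ∀ v i, v i = 0 → f v i.castSucc = 0)
    (upper : ∀ v i, v i = k → f v (Fin.last N) = 0) : kuhnDegree k f = 1 := by
  induction N with
  | zero => simpa [kuhnDegree] using hf _
  | succ M ih =>
    let g (v : Fin M → ℕ) (c : Fin (M + 1)) : R := f (Fin.cons 0 v) c.succ
    have restricted_degree : kuhnDegree k g = 1 := by
      refine ih (fun v ↦ ?_) (fun v i hi ↦ lower _ i.succ hi) fun v i hi ↦ upper _ i.succ hi
      have := hf (Fin.cons 0 v)
      rwa [Fin.sum_univ_succ, show f (Fin.cons 0 v) 0 = 0 from lower _ 0 rfl, zero_add] at this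
    have upper_facet (π : Equiv.Perm (Fin (M + 1))) (y : Fin M → ℕ) :
        facetMinor f 0 π ((π.symm 0).insertNth (α := fun _ ↦ ℕ) k y) = 0 :=
      facetMinor_zero_eq_zero (c := Fin.last M) (fun v ↦ upper v _) y
    have lower_facet {π : Equiv.Perm (Fin (M + 1))} (hπ : π.symm 0 ≠ 0) (y : Fin M → ℕ) :
        facetMinor f 0 π ((π.symm 0).insertNth (α := fun _ ↦ ℕ) 0 y) = 0 := by
      obtain ⟨c, hc⟩ := Fin.exists_succ_eq.mpr hπ
      exact facetMinor_zero_eq_zero (c := c.castSucc)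
        (fun v hv ↦ by rw [Fin.succ_castSucc, hc]; exact lower v _ hv) y
    rw [← restricted_degree, kuhnDegree_succ hf, ← Equiv.sum_comp Equiv.Perm.decomposeFin.symm,
      Fintype.sum_prod_type, Fin.sum_univ_succ]
    have symm_zero (σ : Equiv.Perm (Fin M)) :
        (Equiv.Perm.decomposeFin.symm (0, σ)).symm 0 = 0 := by simp [Equiv.symm_apply_eq]
    have symm_ne_zero (l : Fin M) (σ : Equiv.Perm (Fin M)) :
        (Equiv.Perm.decomposeFin.symm (l.succ, σ)).symm 0 ≠ 0 := by
      simpa [Equiv.symm_apply_eq] using (Fin.succ_ne_zero l).symm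
    simp only [upper_facet, sub_zero]
    simp only [lower_facet (symm_ne_zero _ _), Finset.sum_const_zero,
      smul_zero, add_zero, symm_zero, Fin.insertNth_zero', facetMinor_zero_decomposeFin,
      Equiv.Perm.decomposeFin.symm_sign, if_true, one_mul, kuhnDegree, Finset.smul_sum, g]

end KuhnDegree

theorem exists_bijective_label {N k : ℕ} {ℓ : (Fin N → ℕ) → Fin (N + 1)}
    (lower : ∀ v i, v i = 0 → ℓ v ≠ i.castSucc) (upper : ∀ v i, v i = k → ℓ v ≠ Fin.last N) :
    ∃ x π, Function.Bijective fun j ↦ ℓ (kuhnVertex x π j) := by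
  let f (v : Fin N → ℕ) : Fin (N + 1) → ℤ := Pi.single (ℓ v) 1
  have degree : kuhnDegree k f = 1 :=
    kuhnDegree_eq_one (fun v ↦ Fintype.sum_pi_single' _ _)
      (fun v i hi ↦ Pi.single_eq_of_ne' (lower v i hi) 1)
      fun v i hi ↦ Pi.single_eq_of_ne' (upper v i hi) 1
  by_contra! not_bijective
  refine zero_ne_one (degree.symm.trans <| Finset.sum_eq_zero fun π _ ↦
    Finset.sum_eq_zero fun x _ ↦ ?_).symm
  have not_injective := mt Finite.injective_iff_bijective.mp (not_bijective (fun i ↦ x i) π)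
  obtain ⟨i, j, same_label, ne⟩ := Function.not_injective_iff.mp not_injective
  rw [Matrix.det_zero_of_row_eq ne (congrArg (Pi.single · 1) same_label), smul_zero]

/-- The point `v / (k + 1)` of the unit cube, truncated to the cube when `v` is too large. -/
noncomputable def gridPoint {N : ℕ} (k : ℕ) (v : Fin N → ℕ) : Fin N → unitInterval :=
  fun i ↦ Set.projIcc (0 : ℝ) 1 zero_le_one (v i / (k + 1))

theorem dist_gridPoint_kuhnVertex_le {N : ℕ} (k : ℕ) (x : Fin N → ℕ) (π : Equiv.Perm (Fin N))
    (j : Fin (N + 1)) : dist (gridPoint k x) (gridPoint k (kuhnVertex x π j)) ≤ 1 / (k + 1) := by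
  have hk : (0 : ℝ) < k + 1 := by positivity
  refine (dist_pi_le_iff (by positivity)).mpr fun i ↦ ?_
  calc dist (gridPoint k x i) (gridPoint k (kuhnVertex x π j) i)
      ≤ dist ((x i : ℝ) / (k + 1)) ((kuhnVertex x π j i : ℝ) / (k + 1)) := by
        simpa [gridPoint] using (LipschitzWith.projIcc (zero_le_one (α := ℝ))).dist_le_mul
          ((x i : ℝ) / (k + 1)) ((kuhnVertex x π j i : ℝ) / (k + 1))
    _ = |(x i : ℝ) - kuhnVertex x π j i| / (k + 1) := by
        rw [Real.dist_eq, ← sub_div, abs_div, abs_of_pos hk]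
    _ ≤ 1 / (k + 1) := by
        gcongr
        simp only [kuhnVertex]
        split_ifs <;> simp

theorem nonempty_iInter_of_notMem_faces {N : ℕ} {U : Fin (N + 1) → Set (Fin N → unitInterval)}
    (isOpen : ∀ c, IsOpen (U c)) (cover : ⋃ c, U c = Set.univ)
    (lower : ∀ i x, x i = 0 → x ∉ U i.castSucc) (upper : ∀ i x, x i = 1 → x ∉ U (Fin.last N)) :
    (⋂ c, U c).Nonempty := by
  obtain ⟨δ, hδ, lebesgue⟩ := lebesgue_number_lemma_of_metric isCompact_univ isOpen cover.ge
  obtain ⟨k, hk⟩ := exists_nat_one_div_lt hδ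
  choose label hlabel using fun x ↦ lebesgue x (Set.mem_univ x)
  have mem_label (x) : x ∈ U (label x) := hlabel x (Metric.mem_ball_self hδ)
  obtain ⟨x, π, bijective⟩ := exists_bijective_label (k := k + 1) (ℓ := label ∘ gridPoint k)
    (fun v i hv hc ↦ lower i (gridPoint k v) (by simp [gridPoint, hv]) (hc ▸ mem_label _))
    (fun v i hv hc ↦ upper i (gridPoint k v)
      (by simp [gridPoint, hv, div_self (Nat.cast_add_one_ne_zero (R := ℝ) k)])
      (hc ▸ mem_label _))
  refine ⟨gridPoint k x, Set.mem_iInter.mpr fun c ↦ ?_⟩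
  obtain ⟨j, rfl⟩ := bijective.surjective c
  exact hlabel _ ((dist_gridPoint_kuhnVertex_le k x π j).trans_lt hk)

theorem CovDimLE.exists_shrinking {X ι : Type*} [TopologicalSpace X] {n : ℕ} (h : CovDimLE X n)
    (hι : (n : ℕ∞) + 1 < ENat.card ι) {G : ι → Set X} (isOpen : ∀ i, IsOpen (G i))
    (cover : ⋃ i, G i = Set.univ) :
    ∃ U : ι → Set X, (∀ i, IsOpen (U i)) ∧ ⋃ i, U i = Set.univ ∧ (∀ i, U i ⊆ G i) ∧
      ⋂ i, U i = ∅ := by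
  obtain ⟨V, V_open, V_cover, V_refines, V_order⟩ :=
    h (Set.range G) (Set.forall_mem_range.mpr isOpen) (Set.sUnion_range G ▸ cover)
  simp only [Set.exists_range_iff] at V_refines
  have : Nonempty ι := (ENat.one_le_card_iff_nonempty ι).mp (le_add_self.trans hι.le)
  choose! index subset_index using V_refines
  refine ⟨fun i ↦ ⋃₀ {w ∈ V | index w = i}, fun i ↦ isOpen_sUnion fun w hw ↦ V_open w hw.1,
    Set.eq_univ_of_forall fun x ↦ ?_, fun i ↦ Set.sUnion_subset ?_, ?_⟩
  · obtain ⟨w, hw, hx⟩ := V_cover.ge (Set.mem_univ x)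
    exact Set.mem_iUnion.mpr ⟨index w, w, ⟨hw, rfl⟩, hx⟩
  · rintro w ⟨hw, rfl⟩
    exact subset_index w hw
  · refine Set.eq_empty_of_forall_notMem fun x hx ↦ ?_
    choose w hw mem_w using Set.mem_iInter.mp hx
    have w_injective : Function.Injective w :=
      Function.LeftInverse.injective (g := index) fun i ↦ (hw i).2
    have range_subset : Set.range w ⊆ {w ∈ V | x ∈ w} :=
      Set.range_subset_iff.mpr fun i ↦ ⟨(hw i).1, mem_w i⟩
    exact (hι.trans_le (w_injective.encard_range.trans (Set.encard_le_encard range_subset))).not_ge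
      (V_order x)

theorem CovDimLE.exists_cover_of_disjoint {X : Type*} [TopologicalSpace X] {n : ℕ}
    (h : CovDimLE X n) {A B : Fin (n + 1) → Set X} (isClosed_A : ∀ i, IsClosed (A i))
    (isClosed_B : ∀ i, IsClosed (B i)) (disjoint : ∀ i, Disjoint (A i) (B i)) :
    ∃ U : Fin (n + 2) → Set X, (∀ c, IsOpen (U c)) ∧ ⋃ c, U c = Set.univ ∧
      (∀ i, Disjoint (U i.castSucc) (A i)) ∧ (∀ i, Disjoint (U (Fin.last (n + 1))) (B i)) ∧
      ⋂ c, U c = ∅ := by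
  let G : Fin (n + 2) → Set X := Fin.lastCases (⋂ i, (B i)ᶜ) fun i ↦ (A i)ᶜ
  have G_last : G (Fin.last (n + 1)) = ⋂ i, (B i)ᶜ := Fin.lastCases_last
  have G_castSucc (i) : G (Fin.castSucc i) = (A i)ᶜ := Fin.lastCases_castSucc _
  have G_open : ∀ c, IsOpen (G c) := Fin.lastCases
    (G_last ▸ isOpen_iInter_of_finite fun i ↦ (isClosed_B i).isOpen_compl)
    fun i ↦ G_castSucc i ▸ (isClosed_A i).isOpen_compl
  have G_cover : ⋃ c, G c = Set.univ := by
    refine Set.eq_univ_of_forall fun x ↦ Set.mem_iUnion.mpr ?_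
    by_cases hx : ∃ i, x ∉ A i
    · exact hx.imp' Fin.castSucc fun i hi ↦ (G_castSucc i).ge hi
    · push Not at hx
      exact ⟨Fin.last _, G_last.ge <| Set.mem_iInter.mpr fun i ↦
        (disjoint i).subset_compl_right (hx i)⟩
  obtain ⟨U, U_open, U_cover, U_subset, U_empty⟩ := h.exists_shrinking (by simp) G_open G_cover
  refine ⟨U, U_open, U_cover, fun i ↦ ?_, fun i ↦ ?_, U_empty⟩
  · exact Set.disjoint_left.mpr fun x hx ↦ (G_castSucc i).le (U_subset _ hx)
  · exact Set.disjoint_left.mpr fun x hx ↦ Set.mem_iInter.mp (G_last.le (U_subset _ hx)) i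

theorem not_covDimLE_of_cube {Y : Type*} [TopologicalSpace Y] [T2Space Y] {n : ℕ}
    {φ : (Fin (n + 1) → unitInterval) → Y} (hφ : Continuous φ)
    (separates : ∀ i x y, x i = 0 → y i = 1 → φ x ≠ φ y) : ¬ CovDimLE Y n := by
  intro h
  have isClosed_face (a : unitInterval) (i : Fin (n + 1)) : IsClosed (φ '' {x | x i = a}) :=
    ((isClosed_singleton.preimage (continuous_apply i)).isCompact.image hφ).isClosed
  have faces_disjoint (i) : Disjoint (φ '' {x | x i = 0}) (φ '' {x | x i = 1}) := by
    rw [Set.disjoint_iff_forall_ne]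
    rintro _ ⟨x, hx, rfl⟩ _ ⟨y, hy, rfl⟩
    exact separates i x y hx hy
  obtain ⟨U, U_open, U_cover, avoids_lower, avoids_upper, U_empty⟩ :=
    h.exists_cover_of_disjoint (isClosed_face 0) (isClosed_face 1) faces_disjoint
  have preimage_cover : ⋃ c, φ ⁻¹' U c = Set.univ := by
    rw [← Set.preimage_iUnion, U_cover, Set.preimage_univ]
  have nonempty := nonempty_iInter_of_notMem_faces (fun c ↦ (U_open c).preimage hφ) preimage_cover
    (fun i x hx hmem ↦ Set.disjoint_left.mp (avoids_lower i) hmem ⟨x, hx, rfl⟩)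
    fun i x hx hmem ↦ Set.disjoint_left.mp (avoids_upper i) hmem ⟨x, hx, rfl⟩
  rw [← Set.preimage_iInter, U_empty] at nonempty
  exact Set.not_nonempty_empty nonempty

section RangeNonemptyCompacts

open TopologicalSpace

variable {W E : Type*} [TopologicalSpace W] [CompactSpace W] [MetricSpace E]

/-- The range of a continuous map on a nonempty compact space, as a nonempty compact set. -/
def rangeNonemptyCompacts [Nonempty W] (f : C(W, E)) : NonemptyCompacts E :=
  ⟨⟨Set.range f, isCompact_range f.continuous⟩, Set.range_nonempty f⟩

theorem lipschitzWith_rangeNonemptyCompacts [Nonempty W] :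
    LipschitzWith 1 (rangeNonemptyCompacts : C(W, E) → NonemptyCompacts E) := by
  refine LipschitzWith.mk_one fun f g ↦ ?_
  rw [Metric.NonemptyCompacts.dist_eq]
  refine Metric.hausdorffDist_le_of_mem_dist dist_nonneg ?_ ?_
  · rintro _ ⟨w, rfl⟩
    exact ⟨g w, ⟨w, rfl⟩, ContinuousMap.dist_apply_le_dist w⟩
  · rintro _ ⟨w, rfl⟩
    exact ⟨f w, ⟨w, rfl⟩, dist_comm f g ▸ ContinuousMap.dist_apply_le_dist w⟩

theorem toGHSpace_rangeNonemptyCompacts {X : Type*} [MetricSpace X] [CompactSpace X] [Nonempty X]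
    {f : C(X, E)} (hf : Isometry f) : (rangeNonemptyCompacts f).toGHSpace = toGHSpace X :=
  toGHSpace_eq_toGHSpace_iff_isometryEquiv.mpr ⟨hf.isometryEquivOnRange.symm⟩

theorem toGHSpace_mem_ghPathConnected_iff {X : Type*} [MetricSpace X] [CompactSpace X]
    [Nonempty X] : toGHSpace X ∈ GHPathConnected ↔ PathConnectedSpace X := by
  obtain ⟨e⟩ := toGHSpace_eq_toGHSpace_iff_isometryEquiv.mp (toGHSpace X).toGHSpace_rep
  exact ⟨fun (_ : PathConnectedSpace _) ↦ e.surjective.pathConnectedSpace e.continuous,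
    fun _ ↦ e.symm.surjective.pathConnectedSpace e.symm.continuous⟩

theorem toGHSpace_mem_ghPathConnected {K : NonemptyCompacts E}
    (hK : IsPathConnected (K : Set E)) : K.toGHSpace ∈ GHPathConnected :=
  toGHSpace_mem_ghPathConnected_iff.mpr (isPathConnected_iff_pathConnectedSpace.mp hK)

/-- The isometry class of the range of a continuous map on a path-connected compact space, as a
point of `𝒫`. -/
noncomputable def pathConnectedRange [PathConnectedSpace W] (f : C(W, E)) : GHPathConnected :=
  ⟨(rangeNonemptyCompacts f).toGHSpace,
    toGHSpace_mem_ghPathConnected (isPathConnected_range f.continuous)⟩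

theorem continuous_pathConnectedRange [PathConnectedSpace W] :
    Continuous (pathConnectedRange : C(W, E) → GHPathConnected) :=
  (toGHSpace_continuous.comp lipschitzWith_rangeNonemptyCompacts.continuous).subtype_mk _

theorem pathConnectedRange_const {W' : Type*} [TopologicalSpace W'] [CompactSpace W']
    [PathConnectedSpace W] [PathConnectedSpace W'] (z : E) :
    pathConnectedRange (.const W z) = pathConnectedRange (.const W' z) := by
  have : rangeNonemptyCompacts (.const W z) = rangeNonemptyCompacts (.const W' z) :=
    SetLike.coe_injective (Set.range_const.trans Set.range_const.symm)
  simp only [pathConnectedRange, this]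

theorem joined_pathConnectedRange {V W' : Type*} [NormedAddCommGroup V] [NormedSpace ℝ V]
    [TopologicalSpace W'] [CompactSpace W'] [PathConnectedSpace W] [PathConnectedSpace W']
    (f : C(W, V)) (g : C(W', V)) : Joined (pathConnectedRange f) (pathConnectedRange g) := by
  have toPoint := (PathConnectedSpace.joined f (.const W 0)).map continuous_pathConnectedRange
  have ofPoint := (PathConnectedSpace.joined (.const W' 0) g).map continuous_pathConnectedRange
  rw [pathConnectedRange_const (W' := W')] at toPoint
  exact toPoint.trans ofPoint

theorem exists_pathConnectedRange_eq (p : GHPathConnected) :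
    ∃ (_ : PathConnectedSpace p.1.Rep) (κ : C(p.1.Rep, lp (fun _ : ℕ ↦ ℝ) ⊤)),
      pathConnectedRange κ = p :=
  have isometry := kuratowskiEmbedding.isometry p.1.Rep
  ⟨p.2, ⟨kuratowskiEmbedding p.1.Rep, isometry.continuous⟩,
    Subtype.ext ((toGHSpace_rangeNonemptyCompacts isometry).trans p.1.toGHSpace_rep)⟩

theorem pathConnectedSpace_ghPathConnected : PathConnectedSpace GHPathConnected where
  nonempty := ⟨pathConnectedRange (ContinuousMap.id PUnit.{1})⟩
  joined p q := by
    obtain ⟨_, κ, hκ⟩ := exists_pathConnectedRange_eq p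
    obtain ⟨_, κ', hκ'⟩ := exists_pathConnectedRange_eq q
    simpa only [hκ, hκ'] using joined_pathConnectedRange κ κ'

end RangeNonemptyCompacts

section DimHCore

open TopologicalSpace
open scoped ENNReal Topology

variable {E F : Type*} [EMetricSpace E] [EMetricSpace F]

/-- The points of `Z` at which `Z` has local Hausdorff dimension at least `d`. Being an isometry
invariant, its diameter is used to recover parameters of a space from its isometry class. -/
def dimHCore (d : ℝ≥0∞) (Z : Set E) : Set E :=
  {z ∈ Z | ∀ t ∈ 𝓝[Z] z, d ≤ dimH t}

theorem dimHCore_mono (d : ℝ≥0∞) {Y Z : Set E} (h : Y ⊆ Z) : dimHCore d Y ⊆ dimHCore d Z :=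
  fun _ hz ↦ ⟨h hz.1, fun t ht ↦ hz.2 t (nhdsWithin_mono _ h ht)⟩

theorem dimHCore_anti {c d : ℝ≥0∞} (h : c ≤ d) (Z : Set E) : dimHCore d Z ⊆ dimHCore c Z :=
  fun _ hz ↦ ⟨hz.1, fun t ht ↦ h.trans (hz.2 t ht)⟩

theorem dimHCore_union {d : ℝ≥0∞} {A B : Set E} (hA : dimH A < d) (isClosed_B : IsClosed B)
    (hB : B ⊆ dimHCore d B) : dimHCore d (A ∪ B) = B := by
  refine Set.Subset.antisymm (fun z hz ↦ ?_) (hB.trans (dimHCore_mono d Set.subset_union_right))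
  by_contra hzB
  have mem_nhds : (A ∪ B) ∩ Bᶜ ∈ 𝓝[A ∪ B] z :=
    Filter.inter_mem self_mem_nhdsWithin
      (mem_nhdsWithin_of_mem_nhds (isClosed_B.isOpen_compl.mem_nhds hzB))
  have subset_A : (A ∪ B) ∩ Bᶜ ⊆ A := fun y hy ↦ hy.1.resolve_right hy.2
  exact ((hz.2 _ mem_nhds).trans (dimH_mono subset_A)).not_gt hA

theorem dimHCore_image {f : E → F} (hf : Isometry f) (d : ℝ≥0∞) (Z : Set E) :
    dimHCore d (f '' Z) = f '' dimHCore d Z := by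
  have mem_nhdsWithin (z : E) (t : Set F) : t ∈ 𝓝[f '' Z] f z ↔ f ⁻¹' t ∈ 𝓝[Z] z := by
    rw [← hf.isEmbedding.map_nhdsWithin_eq, Filter.mem_map]
  ext w
  constructor
  · rintro ⟨⟨z, hz, rfl⟩, hd⟩
    refine ⟨z, ⟨hz, fun t ht ↦ ?_⟩, rfl⟩
    rw [← hf.dimH_image]
    exact hd _ ((mem_nhdsWithin _ _).mpr (by rwa [Set.preimage_image_eq _ hf.injective]))
  · rintro ⟨z, ⟨hz, hd⟩, rfl⟩
    refine ⟨⟨z, hz, rfl⟩, fun t ht ↦ (hd _ ((mem_nhdsWithin _ _).mp ht)).trans ?_⟩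
    rw [← hf.dimH_image]
    exact dimH_mono (Set.image_preimage_subset f t)

variable {X Y : Type*} [MetricSpace X] [MetricSpace Y]

theorem diam_dimHCore_univ (d : ℝ≥0∞) (Z : Set X) :
    Metric.diam (dimHCore d (Set.univ : Set Z)) = Metric.diam (dimHCore d Z) := by
  rw [← isometry_subtype_coe.diam_image, ← dimHCore_image isometry_subtype_coe, Set.image_univ,
    Subtype.range_coe]

theorem diam_dimHCore_eq_of_toGHSpace_eq (d : ℝ≥0∞) {K : NonemptyCompacts X}
    {L : NonemptyCompacts Y} (h : K.toGHSpace = L.toGHSpace) :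
    Metric.diam (dimHCore d (K : Set X)) = Metric.diam (dimHCore d (L : Set Y)) := by
  obtain ⟨e⟩ := toGHSpace_eq_toGHSpace_iff_isometryEquiv.mp h
  calc Metric.diam (dimHCore d (K : Set X))
      = Metric.diam (dimHCore d (Set.univ : Set K)) := (diam_dimHCore_univ d (K : Set X)).symm
    _ = Metric.diam (dimHCore d (Set.univ : Set L)) := by
        rw [← e.isometry.diam_image, ← dimHCore_image e.isometry, Set.image_univ,
          e.surjective.range_eq]
    _ = Metric.diam (dimHCore d (L : Set Y)) := diam_dimHCore_univ d (L : Set Y)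

end DimHCore

section Boxes

variable {ι : Type*} [Fintype ι]

theorem dimH_Icc_of_forall_lt {a b : ι → ℝ} (h : ∀ i, a i < b i) :
    dimH (Set.Icc a b) = Fintype.card ι := by
  choose x ha hb using fun i ↦ exists_between (h i)
  rw [Real.dimH_of_mem_nhds (pi_Icc_mem_nhds ha hb), Module.finrank_fintype_fun_eq_card]

theorem dimH_Icc {a b : ι → ℝ} (h : a ≤ b) :
    dimH (Set.Icc a b) = Finset.card {i | a i < b i} := by
  classical
  let J := {i // a i < b i}
  let g (x : J → ℝ) (i : ι) : ℝ := if hi : a i < b i then x ⟨i, hi⟩ else a i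
  have isometry_g : Isometry g := by
    refine Isometry.of_dist_eq fun x y ↦ le_antisymm ?_ ?_
    · refine (dist_pi_le_iff dist_nonneg).mpr fun i ↦ ?_
      by_cases hi : a i < b i
      · simpa [g, hi] using dist_le_pi_dist x y ⟨i, hi⟩
      · simp [g, hi]
    · refine (dist_pi_le_iff dist_nonneg).mpr fun i ↦ ?_
      simpa [g, i.2] using dist_le_pi_dist (g x) (g y) i
  have image_g : g '' Set.Icc (fun i ↦ a i) (fun i ↦ b i) = Set.Icc a b := by
    ext y
    constructor
    · rintro ⟨x, hx, rfl⟩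
      refine Set.mem_Icc.mpr ⟨fun i ↦ ?_, fun i ↦ ?_⟩ <;> by_cases hi : a i < b i
      · simpa [g, hi] using hx.1 ⟨i, hi⟩
      · simp [g, hi]
      · simpa [g, hi] using hx.2 ⟨i, hi⟩
      · simpa [g, hi] using h i
    · intro hy
      refine ⟨fun i ↦ y i, ⟨fun i ↦ hy.1 i, fun i ↦ hy.2 i⟩, ?_⟩
      ext i
      by_cases hi : a i < b i
      · simp [g, hi]
      · simpa [g, hi] using le_antisymm (hy.1 i) ((hy.2 i).trans (not_lt.mp hi))
  rw [← image_g, isometry_g.dimH_image, dimH_Icc_of_forall_lt fun i : J ↦ i.2,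
    Fintype.card_subtype]

theorem Icc_subset_dimHCore {a b : ι → ℝ} :
    Set.Icc a b ⊆ dimHCore (Finset.card {i | a i < b i}) (Set.Icc a b) := by
  refine fun z hz ↦ ⟨hz, fun t ht ↦ ?_⟩
  obtain ⟨r, hr, hrt⟩ := Metric.mem_nhdsWithin_iff.mp ht
  let a' (i : ι) : ℝ := max (a i) (z i - r / 2)
  let b' (i : ι) : ℝ := min (b i) (z i + r / 2)
  have z_mem : z ∈ Set.Icc a' b' :=
    ⟨fun i ↦ max_le (hz.1 i) (by linarith), fun i ↦ le_min (hz.2 i) (by linarith)⟩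
  have support_subset (i : ι) (hi : a i < b i) : a' i < b' i := by
    have := hz.1 i
    have := hz.2 i
    simp only [a', b', max_lt_iff, lt_min_iff]
    exact ⟨⟨hi, by linarith⟩, by linarith, by linarith⟩
  have subset_t : Set.Icc a' b' ⊆ t := by
    refine fun y hy ↦ hrt ⟨?_, fun i ↦ (le_max_left _ _).trans (hy.1 i),
      fun i ↦ (hy.2 i).trans (min_le_left _ _)⟩
    refine (dist_pi_lt_iff hr).mpr fun i ↦ ?_
    have := (le_max_right _ _).trans (hy.1 i)
    have := (hy.2 i).trans (min_le_right _ _)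
    rw [Real.dist_eq, abs_lt]
    exact ⟨by linarith, by linarith⟩
  calc ((Finset.card {i | a i < b i} : ℕ) : ENNReal)
      ≤ Finset.card {i | a' i < b' i} := by
        exact_mod_cast Finset.card_le_card <|
          Finset.monotone_filter_right _ fun i _ ↦ support_subset i
    _ = dimH (Set.Icc a' b') := (dimH_Icc (z_mem.1.trans z_mem.2)).symm
    _ ≤ dimH t := dimH_mono subset_t

end Boxes

section Cubes

open TopologicalSpace
open scoped NNReal ENNReal

variable {ι : Type*}

theorem dimH_biUnion_lt {E J : Type*} [EMetricSpace E] {I : Set J} (hI : I.Finite) {d : ℝ≥0∞}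
    (hd : 0 < d) {A : J → Set E} (hA : ∀ e ∈ I, dimH (A e) < d) : dimH (⋃ e ∈ I, A e) < d := by
  lift I to Finset J using hI
  rw [dimH_bUnion I.countable_toSet]
  simpa only [SetLike.mem_coe, ← Finset.sup_eq_iSup, Finset.sup_lt_iff hd] using hA

/-- The vertex opposite to `P` of the coordinate cube with vertex `P`, directions `S` and side
length `s`. -/
noncomputable def cubeCorner (P : ι → ℝ) (S : Finset ι) (s : ℝ≥0) : ι → ℝ :=
  P + (S : Set ι).indicator fun _ ↦ (s : ℝ)

/-- The coordinate cube with lowest vertex `P`, directions `S` and side length `s`. It is used as a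
`#S`-dimensional decoration of diameter `s` at the point `P` of a compact set. -/
def cube (P : ι → ℝ) (S : Finset ι) (s : ℝ≥0) : Set (ι → ℝ) :=
  Set.Icc P (cubeCorner P S s)

theorem le_cubeCorner (P : ι → ℝ) (S : Finset ι) (s : ℝ≥0) : P ≤ cubeCorner P S s :=
  le_add_of_nonneg_right (Set.indicator_nonneg fun _ _ ↦ s.2)

theorem left_mem_cube (P : ι → ℝ) (S : Finset ι) (s : ℝ≥0) : P ∈ cube P S s :=
  Set.left_mem_Icc.mpr (le_cubeCorner P S s)

theorem cubeCorner_zero (P : ι → ℝ) (S : Finset ι) : cubeCorner P S 0 = P := by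
  ext i
  simp [cubeCorner]

theorem cube_zero (P : ι → ℝ) (S : Finset ι) : cube P S 0 = {P} := by
  rw [cube, cubeCorner_zero, Set.Icc_self]

theorem cube_subset_cube (P : ι → ℝ) {S T : Finset ι} {s t : ℝ≥0} (hST : S ⊆ T) (hst : s ≤ t) :
    cube P S s ⊆ cube P T t := by
  refine Set.Icc_subset_Icc_right (add_le_add_right ?_ P)
  calc (S : Set ι).indicator (fun _ ↦ (s : ℝ))
      ≤ (S : Set ι).indicator fun _ ↦ (t : ℝ) := fun _ ↦ Set.indicator_le_indicator hst
    _ ≤ (T : Set ι).indicator fun _ ↦ (t : ℝ) :=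
      Set.indicator_le_indicator_of_subset (Finset.coe_subset.mpr hST) fun _ ↦ t.2

theorem isPathConnected_cube (P : ι → ℝ) (S : Finset ι) (s : ℝ≥0) :
    IsPathConnected (cube P S s) :=
  (convex_Icc _ _).isPathConnected ⟨P, left_mem_cube P S s⟩

section CubeMetric

variable [Fintype ι]

theorem filter_lt_cubeCorner (P : ι → ℝ) (S : Finset ι) {s : ℝ≥0} (hs : 0 < s) :
    ({i | P i < cubeCorner P S s i} : Finset ι) = S := by
  ext i
  by_cases hi : i ∈ S <;> simp [cubeCorner, hi, hs]

theorem dimH_cube (P : ι → ℝ) (S : Finset ι) {s : ℝ≥0} (hs : 0 < s) :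
    dimH (cube P S s) = S.card := by
  rw [cube, dimH_Icc (le_cubeCorner P S s), filter_lt_cubeCorner P S hs]

theorem cube_subset_dimHCore (P : ι → ℝ) (S : Finset ι) {s : ℝ≥0} (hs : 0 < s) :
    cube P S s ⊆ dimHCore S.card (cube P S s) := by
  have := Icc_subset_dimHCore (a := P) (b := cubeCorner P S s)
  rwa [filter_lt_cubeCorner P S hs] at this

theorem dist_cubeCorner_le (P : ι → ℝ) (S : Finset ι) (s t : ℝ≥0) :
    dist (cubeCorner P S s) (cubeCorner P S t) ≤ dist s t := by
  refine (dist_pi_le_iff dist_nonneg).mpr fun i ↦ ?_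
  by_cases hi : i ∈ S <;> simp [cubeCorner, hi, NNReal.dist_eq, Real.dist_eq]

theorem exists_mem_cube_dist_le {P y : ι → ℝ} {S : Finset ι} {s : ℝ≥0} (hy : y ∈ cube P S s)
    (t : ℝ≥0) : ∃ z ∈ cube P S t, dist y z ≤ dist s t := by
  refine ⟨y ⊓ cubeCorner P S t, ⟨le_inf hy.1 (le_cubeCorner P S t), inf_le_right⟩, ?_⟩
  refine (dist_pi_le_iff dist_nonneg).mpr fun i ↦ ?_
  calc dist (y i) ((y ⊓ cubeCorner P S t) i)
      = |cubeCorner P S s i ⊓ y i - cubeCorner P S t i ⊓ y i| := by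
        rw [Real.dist_eq, inf_eq_right.mpr (hy.2 i), Pi.inf_apply, inf_comm]
    _ ≤ dist (cubeCorner P S s i) (cubeCorner P S t i) := abs_inf_sub_inf_le_abs _ _ _
    _ ≤ dist s t := (dist_le_pi_dist _ _ i).trans (dist_cubeCorner_le P S s t)

theorem diam_cube_le (P : ι → ℝ) (S : Finset ι) (s : ℝ≥0) : Metric.diam (cube P S s) ≤ s := by
  refine Metric.diam_le_of_forall_dist_le s.2 fun x hx y hy ↦ ?_
  calc dist x y ≤ dist P (cubeCorner P S s) := Real.dist_le_of_mem_pi_Icc hx hy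
    _ = dist (cubeCorner P S 0) (cubeCorner P S s) := by rw [cubeCorner_zero]
    _ ≤ dist 0 s := dist_cubeCorner_le P S 0 s
    _ = s := by simp [NNReal.dist_eq]

theorem le_diam_cube (P : ι → ℝ) {S : Finset ι} (hS : S.Nonempty) (s : ℝ≥0) :
    s ≤ Metric.diam (cube P S s) := by
  obtain ⟨i, hi⟩ := hS
  calc (s : ℝ) = dist (P i) (cubeCorner P S s i) := by simp [cubeCorner, hi]
    _ ≤ dist P (cubeCorner P S s) := dist_le_pi_dist _ _ i
    _ ≤ Metric.diam (cube P S s) :=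
      Metric.dist_le_diam_of_mem isCompact_Icc.isBounded (left_mem_cube P S s)
        (Set.right_mem_Icc.mpr (le_cubeCorner P S s))

end CubeMetric

section AttachCubes

variable {J : Type*}

/-- The compact set `K` with a coordinate cube of directions `S j` and side length `s j` attached at
the point `P` for every `j`. -/
def attachCubes [Finite J] (K : NonemptyCompacts (ι → ℝ)) (P : ι → ℝ) (S : J → Finset ι)
    (s : J → ℝ≥0) : NonemptyCompacts (ι → ℝ) where
  carrier := K ∪ ⋃ j, cube P (S j) (s j)
  isCompact' := K.isCompact.union (isCompact_iUnion fun _ ↦ isCompact_Icc)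
  nonempty' := K.nonempty.inl

variable {K : NonemptyCompacts (ι → ℝ)} {P : ι → ℝ} {S : J → Finset ι}

theorem attachCubes_zero [Finite J] (hP : P ∈ K) : attachCubes K P S 0 = K := by
  refine SetLike.coe_injective (Set.union_eq_left.mpr (Set.iUnion_subset fun j ↦ ?_))
  rw [Pi.zero_apply, cube_zero]
  exact Set.singleton_subset_iff.mpr hP

theorem isPathConnected_attachCubes [Finite J] (hK : IsPathConnected (K : Set (ι → ℝ)))
    (hP : P ∈ K) (s : J → ℝ≥0) : IsPathConnected (attachCubes K P S s : Set (ι → ℝ)) := by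
  refine ⟨P, .inl hP, ?_⟩
  rintro y (hy | hy)
  · exact (hK.joinedIn P hP y hy).mono Set.subset_union_left
  · obtain ⟨j, hj⟩ := Set.mem_iUnion.mp hy
    exact ((isPathConnected_cube P (S j) (s j)).joinedIn P (left_mem_cube _ _ _) y hj).mono
      ((Set.subset_iUnion (fun j ↦ cube P (S j) (s j)) j).trans Set.subset_union_right)

theorem lipschitzWith_attachCubes [Fintype ι] [Fintype J] :
    LipschitzWith 1 (attachCubes K P S) := by
  have near (s t : J → ℝ≥0) : ∀ y ∈ (attachCubes K P S s : Set (ι → ℝ)),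
      ∃ z ∈ (attachCubes K P S t : Set (ι → ℝ)), dist y z ≤ dist s t := by
    rintro y (hy | hy)
    · exact ⟨y, .inl hy, by simp⟩
    · obtain ⟨j, hj⟩ := Set.mem_iUnion.mp hy
      obtain ⟨z, hz, hyz⟩ := exists_mem_cube_dist_le hj (t j)
      exact ⟨z, .inr (Set.mem_iUnion_of_mem j hz), hyz.trans (dist_le_pi_dist s t j)⟩
  refine LipschitzWith.mk_one fun s t ↦ ?_
  rw [Metric.NonemptyCompacts.dist_eq]
  exact Metric.hausdorffDist_le_of_mem_dist dist_nonneg (near s t) (dist_comm s t ▸ near t s)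

variable [Fintype ι] [Finite J] [LinearOrder J] {s : J → ℝ≥0}

theorem dimHCore_attachCubes (hS : StrictAnti S) (pos : ∀ j, 0 < s j) {j : J}
    (hK : dimH (K : Set (ι → ℝ)) < (S j).card) :
    dimHCore (S j).card (attachCubes K P S s : Set (ι → ℝ)) =
      ⋃ e ∈ Set.Iic j, cube P (S e) (s e) := by
  have eq_union : (attachCubes K P S s : Set (ι → ℝ)) =
      ((K : Set (ι → ℝ)) ∪ ⋃ e ∈ Set.Ioi j, cube P (S e) (s e)) ∪
        ⋃ e ∈ Set.Iic j, cube P (S e) (s e) := by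
    rw [Set.union_assoc, ← Set.biUnion_union, Set.union_comm (Set.Ioi j), Set.Iic_union_Ioi,
      Set.biUnion_univ]
    rfl
  rw [eq_union]
  refine dimHCore_union ?_ ?_ (Set.iUnion₂_subset fun e he ↦ ?_)
  · rw [dimH_union]
    refine max_lt hK (dimH_biUnion_lt (Set.toFinite _) (zero_le.trans_lt hK) fun e he ↦ ?_)
    rw [dimH_cube P (S e) (pos e)]
    exact_mod_cast Finset.card_lt_card (hS he)
  · exact (Set.toFinite _).isClosed_biUnion fun _ _ ↦ isClosed_Icc
  · calc cube P (S e) (s e)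
        ⊆ dimHCore (S e).card (cube P (S e) (s e)) := cube_subset_dimHCore P (S e) (pos e)
      _ ⊆ dimHCore (S j).card (cube P (S e) (s e)) :=
        dimHCore_anti (by exact_mod_cast Finset.card_le_card (hS.antitone he)) _
      _ ⊆ dimHCore (S j).card (⋃ e ∈ Set.Iic j, cube P (S e) (s e)) :=
        dimHCore_mono _ <|
          Set.subset_biUnion_of_mem (u := fun e ↦ cube P (S e) (s e)) he

theorem diam_dimHCore_attachCubes (hS : StrictAnti S) (hs : Monotone s) (pos : ∀ j, 0 < s j)
    {j : J} (hK : dimH (K : Set (ι → ℝ)) < (S j).card) :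
    Metric.diam (dimHCore (S j).card (attachCubes K P S s : Set (ι → ℝ))) = s j := by
  have nonempty : (S j).Nonempty := by
    rw [← Finset.card_pos]
    exact_mod_cast zero_le.trans_lt hK
  have subset_cube : ⋃ e ∈ Set.Iic j, cube P (S e) (s e) ⊆ cube P Finset.univ (s j) :=
    Set.iUnion₂_subset fun e he ↦ cube_subset_cube P (Finset.subset_univ _) (hs he)
  have cube_subset : cube P (S j) (s j) ⊆ ⋃ e ∈ Set.Iic j, cube P (S e) (s e) :=
    Set.subset_biUnion_of_mem (u := fun e ↦ cube P (S e) (s e)) Set.self_mem_Iic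
  have isBounded : Bornology.IsBounded (cube P Finset.univ (s j)) := isCompact_Icc.isBounded
  rw [dimHCore_attachCubes hS pos hK]
  apply le_antisymm
  · exact (Metric.diam_mono subset_cube isBounded).trans (diam_cube_le P _ _)
  · exact (le_diam_cube P nonempty (s j)).trans
      (Metric.diam_mono cube_subset (isBounded.subset subset_cube))

end AttachCubes

end Cubes

section Approximation

open TopologicalSpace

theorem dist_toGHSpace_rangeNonemptyCompacts_le {X E : Type*} [MetricSpace X] [CompactSpace X]
    [Nonempty X] [MetricSpace E] (f : C(X, E)) {ε : ℝ}
    (hf : ∀ x y, |dist x y - dist (f x) (f y)| ≤ ε) :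
    dist (rangeNonemptyCompacts f).toGHSpace (toGHSpace X) ≤ ε / 2 := by
  rw [dist_comm, NonemptyCompacts.toGHSpace]
  let Φ (x : (Set.univ : Set X)) : rangeNonemptyCompacts f := ⟨f x, x, rfl⟩
  have surjective (y) : ∃ x, dist y (Φ x) ≤ 0 := by
    obtain ⟨_, x, rfl⟩ := y
    exact ⟨⟨x, trivial⟩, (dist_self _).le⟩
  have := ghDist_le_of_approx_subsets (ε₁ := 0) Φ (fun x ↦ ⟨x, trivial, (dist_self x).le⟩)
    surjective fun x y ↦ hf x y
  rwa [zero_add, add_zero, ghDist] at this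

theorem exists_almostIsometry_pi (X : Type*) [MetricSpace X] [CompactSpace X] {ε : ℝ}
    (hε : 0 < ε) :
    ∃ (t : Finset X) (f : C(X, t → ℝ)), ∀ x y, |dist x y - dist (f x) (f y)| ≤ ε := by
  obtain ⟨t, -, finite_t, cover⟩ :=
    finite_cover_balls_of_compact (isCompact_univ (X := X)) (half_pos hε)
  lift t to Finset X using finite_t
  refine ⟨t, ⟨fun x q ↦ dist x q, by fun_prop⟩, fun x y ↦ abs_sub_le_iff.mpr ⟨?_, ?_⟩⟩
  · obtain ⟨q, hq, hxq⟩ := Set.mem_iUnion₂.mp (cover (Set.mem_univ x))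
    have le_dist_f := dist_le_pi_dist (fun q : t ↦ dist x q) (fun q : t ↦ dist y q) ⟨q, hq⟩
    rw [Real.dist_eq, abs_sub_comm] at le_dist_f
    have := (le_abs_self _).trans le_dist_f
    have := dist_triangle_right x y q
    have := Metric.mem_ball.mp hxq
    simp only [ContinuousMap.coe_mk]
    linarith
  · have dist_f_le : dist (fun q : t ↦ dist x q) (fun q : t ↦ dist y q) ≤ dist x y :=
      (dist_pi_le_iff dist_nonneg).mpr fun q ↦ abs_dist_sub_le x y q
    simp only [ContinuousMap.coe_mk]
    linarith

theorem isometry_sumElim_left {ι κ : Type*} [Fintype ι] [Fintype κ] (c : κ → ℝ) :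
    Isometry fun x : ι → ℝ ↦ Sum.elim x c := by
  refine Isometry.of_dist_eq fun x y ↦ le_antisymm ?_ ?_
  · refine (dist_pi_le_iff dist_nonneg).mpr ?_
    rintro (i | i)
    · exact dist_le_pi_dist x y i
    · simp
  · exact (dist_pi_le_iff dist_nonneg).mpr fun i ↦
      dist_le_pi_dist (Sum.elim x c) (Sum.elim y c) (.inl i)

theorem exists_isPathConnected_dimH_le_dist_lt (p : GHPathConnected) (κ : Type*) [Fintype κ]
    {ε : ℝ} (hε : 0 < ε) :
    ∃ (ι : Type) (_ : Fintype ι) (K : NonemptyCompacts (ι ⊕ κ → ℝ)),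
      IsPathConnected (K : Set (ι ⊕ κ → ℝ)) ∧ dimH (K : Set (ι ⊕ κ → ℝ)) ≤ Fintype.card ι ∧
        dist K.toGHSpace p < ε := by
  have : PathConnectedSpace p.1.Rep := p.2
  obtain ⟨t, f, hf⟩ := exists_almostIsometry_pi p.1.Rep hε
  have isometry_pad := isometry_sumElim_left (ι := t) (0 : κ → ℝ)
  let g : C(p.1.Rep, t ⊕ κ → ℝ) := .comp ⟨_, isometry_pad.continuous⟩ f
  have hg (x y) : |dist x y - dist (g x) (g y)| ≤ ε := by
    rw [show dist (g x) (g y) = dist (f x) (f y) from isometry_pad.dist_eq _ _]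
    exact hf x y
  refine ⟨t, inferInstance, rangeNonemptyCompacts g, isPathConnected_range g.continuous, ?_, ?_⟩
  · calc dimH (Set.range g) = dimH (Set.range f) := by
          rw [← isometry_pad.dimH_image, ← Set.range_comp]; rfl
      _ ≤ dimH (Set.univ : Set (t → ℝ)) := dimH_mono (Set.subset_univ _)
      _ = Fintype.card t := Real.dimH_univ_pi t
  · calc dist (rangeNonemptyCompacts g).toGHSpace p
        = dist (rangeNonemptyCompacts g).toGHSpace (toGHSpace p.1.Rep) := by
          rw [p.1.toGHSpace_rep]
      _ ≤ ε / 2 := dist_toGHSpace_rangeNonemptyCompacts_le g hg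
      _ < ε := half_lt_self hε

end Approximation

section SeparatingFamily

open TopologicalSpace
open scoped NNReal

variable {N : ℕ}

/-- Side lengths for `N` attached cubes, encoding a point `x` of the `N`-dimensional unit cube. The
summand `j` makes them increase with `j` for every `x`, so that the `j`-th one can be recovered as a
diameter. -/
noncomputable def cubeSides (δ : ℝ≥0) (x : Fin N → unitInterval) (j : Fin N) : ℝ≥0 :=
  δ * (j + 1 + unitInterval.toNNReal (x j))

theorem continuous_cubeSides (δ : ℝ≥0) : Continuous (cubeSides δ (N := N)) := by
  unfold cubeSides
  fun_prop

theorem cubeSides_pos {δ : ℝ≥0} (hδ : 0 < δ) (x : Fin N → unitInterval) (j : Fin N) :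
    0 < cubeSides δ x j := by
  unfold cubeSides
  positivity

theorem monotone_cubeSides (δ : ℝ≥0) (x : Fin N → unitInterval) : Monotone (cubeSides δ x) := by
  refine monotone_iff_forall_lt.mpr fun j e hje ↦ mul_le_mul_right ?_ δ
  calc (j : ℝ≥0) + 1 + unitInterval.toNNReal (x j) ≤ (j + 1 : ℕ) + 1 := by
        push_cast
        gcongr
        exact (x j).2.2
    _ ≤ e + 1 := by gcongr; exact hje
    _ ≤ e + 1 + unitInterval.toNNReal (x e) := le_self_add

theorem dist_cubeSides_zero_le (δ : ℝ≥0) (x : Fin N → unitInterval) :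
    dist (cubeSides δ x) 0 ≤ δ * (N + 1) := by
  refine (dist_pi_le_iff (by positivity)).mpr fun j ↦ ?_
  have : cubeSides δ x j ≤ δ * (N + 1) := by
    refine mul_le_mul_right ?_ δ
    gcongr
    · exact_mod_cast j.2
    · exact (x j).2.2
  simpa [NNReal.dist_eq] using mod_cast this

/-- The directions of the attached cubes inside `ι ⊕ Fin N`. Their dimensions exceed `#ι` and
decrease strictly with `j`. -/
def cubeDirections (ι : Type*) [Fintype ι] (j : Fin N) : Finset (ι ⊕ Fin N) :=
  Finset.univ.disjSum (Finset.Ici j)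

theorem strictAnti_cubeDirections (ι : Type*) [Fintype ι] :
    StrictAnti (cubeDirections ι (N := N)) := fun _ _ h ↦
  Finset.disjSum_strictMono_right _ (Finset.Ici_ssubset_Ici.mpr h)

theorem card_lt_card_cubeDirections (ι : Type*) [Fintype ι] (j : Fin N) :
    Fintype.card ι < (cubeDirections ι j).card := by
  rw [cubeDirections, Finset.card_disjSum, Finset.card_univ]
  exact Nat.lt_add_of_pos_right (Finset.card_pos.mpr Finset.nonempty_Ici)

theorem cubeSides_eq_of_toGHSpace_attachCubes_eq {ι : Type*} [Fintype ι]
    {K : NonemptyCompacts (ι ⊕ Fin N → ℝ)}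
    (dimH_K : dimH (K : Set (ι ⊕ Fin N → ℝ)) ≤ Fintype.card ι) {P : ι ⊕ Fin N → ℝ} {δ : ℝ≥0}
    (hδ : 0 < δ) {x y : Fin N → unitInterval}
    (h : (attachCubes K P (cubeDirections ι) (cubeSides δ x)).toGHSpace =
      (attachCubes K P (cubeDirections ι) (cubeSides δ y)).toGHSpace) :
    cubeSides δ x = cubeSides δ y := by
  ext j
  have dimH_lt : dimH (K : Set (ι ⊕ Fin N → ℝ)) < (cubeDirections ι j).card :=
    dimH_K.trans_lt (by exact_mod_cast card_lt_card_cubeDirections ι j)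
  have diam_core (z : Fin N → unitInterval) :=
    diam_dimHCore_attachCubes (P := P) (strictAnti_cubeDirections ι) (monotone_cubeSides δ z)
      (cubeSides_pos hδ z) dimH_lt
  rw [← diam_core x, ← diam_core y, diam_dimHCore_eq_of_toGHSpace_eq _ h]

theorem injective_cubeSides {δ : ℝ≥0} (hδ : 0 < δ) :
    Function.Injective (cubeSides δ (N := N)) := by
  intro x y h
  ext j
  have := mul_left_cancel₀ hδ.ne' (congrFun h j)
  exact congrArg NNReal.toReal (add_left_cancel this)

theorem exists_continuous_injective_dist_lt (p : GHPathConnected) (N : ℕ) {ε : ℝ} (hε : 0 < ε) :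
    ∃ φ : (Fin N → unitInterval) → GHPathConnected,
      Continuous φ ∧ Function.Injective φ ∧ ∀ x, dist (φ x) p < ε := by
  obtain ⟨ι, _, K, isPathConnected_K, dimH_K, dist_K⟩ :=
    exists_isPathConnected_dimH_le_dist_lt p (Fin N) (half_pos hε)
  obtain ⟨P, hP⟩ := K.nonempty
  let δ : ℝ≥0 := (ε / 2 / (N + 1)).toNNReal
  have hδ : 0 < δ := Real.toNNReal_pos.mpr (by positivity)
  have hδN : (δ * (N + 1) : ℝ) = ε / 2 := by
    rw [Real.coe_toNNReal _ (by positivity), div_mul_cancel₀ _ (by positivity)]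
  let Z (s : Fin N → ℝ≥0) := (attachCubes K P (cubeDirections ι) s).toGHSpace
  have lipschitz_Z : LipschitzWith (1 * 1) Z := toGHSpace_lipschitz.comp lipschitzWith_attachCubes
  have Z_mem (s) : Z s ∈ GHPathConnected :=
    toGHSpace_mem_ghPathConnected (isPathConnected_attachCubes isPathConnected_K hP s)
  refine ⟨fun x ↦ ⟨Z (cubeSides δ x), Z_mem _⟩,
    (lipschitz_Z.continuous.comp (continuous_cubeSides δ)).subtype_mk _, fun x y h ↦ ?_,
    fun x ↦ ?_⟩
  · exact injective_cubeSides hδ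
      (cubeSides_eq_of_toGHSpace_attachCubes_eq dimH_K hδ (congrArg Subtype.val h))
  · calc dist (Z (cubeSides δ x)) p
        ≤ dist (Z (cubeSides δ x)) (Z 0) + dist (Z 0) p := dist_triangle _ _ _
      _ ≤ dist (cubeSides δ x) 0 + dist (Z 0) p := by
        gcongr
        simpa using lipschitz_Z.dist_le_mul (cubeSides δ x) 0
      _ < ε / 2 + ε / 2 := by
        refine add_lt_add_of_le_of_lt ((dist_cubeSides_zero_le δ x).trans hδN.le) ?_
        simpa only [Z, attachCubes_zero hP] using dist_K
      _ = ε := add_halves ε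

end SeparatingFamily

/-- The set `𝒫` of all compact path-connected metric spaces
is path-connected as a subspace of the Gromov–Hausdorff space, and every
nonempty open subset of `𝒫` has infinite covering dimension. -/
theorem statement5 :
    PathConnectedSpace ↥GHPathConnected ∧
    ∀ U : Set ↥GHPathConnected, IsOpen U → U.Nonempty →
      ¬ ∃ n : ℕ, CovDimLE ↥U n := by
  refine ⟨pathConnectedSpace_ghPathConnected, fun U isOpen_U ⟨p, hp⟩ ⟨n, covDimLE⟩ ↦ ?_⟩
  obtain ⟨ε, hε, ball_subset⟩ := Metric.isOpen_iff.mp isOpen_U p hp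
  obtain ⟨φ, continuous_φ, injective_φ, dist_lt⟩ :=
    exists_continuous_injective_dist_lt p (n + 1) hε
  have continuous_lift : Continuous fun x ↦ (⟨φ x, ball_subset (dist_lt x)⟩ : U) :=
    continuous_φ.subtype_mk _
  refine not_covDimLE_of_cube continuous_lift (fun i x y hx hy h ↦ ?_) covDimLE
  have := congrFun (injective_φ (congrArg Subtype.val h)) i
  exact zero_ne_one (hx.symm.trans (this.trans hy))
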